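/- arXiv:1604.03015 — 3 statements merged into one kernel-verified Lean document; each statement's English description precedes it below -/
import Mathlib

section
/- For every positive integer h and every ε > 0, there exists a finite abelian group W and a subset A ⊆ W such that A − A = W and |hA| < ε·|W|. -/
open Pointwise

/-- The `h`-fold sumset of a set `A` in an additive group. -/
def nfoldSum {W : Type*} [AddCommMonoid W] (h : ℕ) (A : Set W) : Set W :=
  {z | ∃ a : Fin h → W, (∀ i, a i ∈ A) ∧ z = ∑ i, a i}

/-- The average of the weights `e` over each fibre of `c` can replace the weights themselves when
summing against a function that is constant on the fibres of `c`. -/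
lemma sum_fiber_average_mul {ι C K : Type*} [Fintype ι] [DecidableEq C] [Field K]
    (c : ι → C) (hc : ∀ i, ((Finset.univ.filter fun j => c j = c i).card : K) ≠ 0)
    (e y : ι → K) (hy : ∀ i j, c i = c j → y i = y j) :
    ∑ i, ((Finset.univ.filter fun j => c j = c i).card : K)⁻¹ *
      (∑ j ∈ Finset.univ.filter (fun j => c j = c i), e j) * y i = ∑ i, e i * y i := by
  have key : ∀ i, ((Finset.univ.filter fun j => c j = c i).card : K)⁻¹ *
      (∑ j ∈ Finset.univ.filter (fun j => c j = c i), e j) * y i =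
      ∑ j, if c j = c i then
        ((Finset.univ.filter fun k => c k = c j).card : K)⁻¹ * (e j * y j) else 0 := by
    intro i
    rw [← Finset.sum_filter, Finset.mul_sum, Finset.sum_mul]
    refine Finset.sum_congr rfl fun j hj => ?_
    have hji := (Finset.mem_filter.mp hj).2
    rw [hy i j hji.symm, hji, mul_assoc]
  rw [Finset.sum_congr rfl fun i _ => key i, Finset.sum_comm]
  refine Finset.sum_congr rfl fun j _ => ?_
  rw [← Finset.sum_filter, Finset.sum_const, nsmul_eq_mul, ← mul_assoc]
  simp_rw [@eq_comm _ (c j)]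
  rw [mul_inv_cancel₀ (hc j), one_mul]

/-- There is a finite abelian group with a self-map `f` such that no sum of `h` terms, each of the
form `f x` or `f x + x` and using at most `l` different values of `x`, vanishes. -/
lemma exists_map_sum_ne_zero (h : ℕ) (hh : 0 < h) (l : ℕ) :
    ∃ (W : Type) (_ : AddCommGroup W) (_ : Fintype W) (f : W → W),
      ∀ (x : Fin h → W) (e : Fin h → Bool), (Set.range x).ncard ≤ l →
        ∑ i, (f (x i) + (e i).toNat • x i) ≠ 0 := by
  classical
  induction l with
  | zero =>
    refine ⟨Unit, inferInstance, inferInstance, id, fun x e hx => ?_⟩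
    rw [Nat.le_zero, Set.ncard_eq_zero] at hx
    exact absurd (Set.mem_range_self (⟨0, hh⟩ : Fin h)) (hx ▸ Set.notMem_empty (x ⟨0, hh⟩))
  | succ l ih =>
    obtain ⟨W, _, _, f, hf⟩ := ih
    obtain ⟨p, hhp, hp⟩ := Nat.exists_infinite_primes (h + 1)
    have : Fact p.Prime := ⟨hp⟩
    have cast_ne_zero : ∀ k : ℕ, 0 < k → k ≤ h → (k : ZMod p) ≠ 0 := by
      intro k hk hkh hk0
      have := Nat.le_of_dvd hk ((ZMod.natCast_eq_zero_iff k p).mp hk0)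
      omega
    refine ⟨((Fin h → W) × (Fin h → Bool) → ZMod p) × W, inferInstance, inferInstance,
      fun x => (fun q => 1 - ((Finset.univ.filter fun j => q.1 j = x.2).card : ZMod p)⁻¹ *
        (∑ j ∈ Finset.univ.filter (fun j => q.1 j = x.2), ((q.2 j).toNat : ZMod p)) * x.1 q,
        f x.2), fun x e hx hsum => ?_⟩
    set c : Fin h → W := fun i => (x i).2
    by_cases hc : (Set.range c).ncard ≤ l
    · apply hf c e hc
      simpa [Prod.snd_sum] using congrArg Prod.snd hsum
    · have hrange : Set.range c = Prod.snd '' Set.range x := by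
        rw [← Set.range_comp]; rfl
      have hinj : Set.InjOn Prod.snd (Set.range x) := by
        refine Set.injOn_of_ncard_image_eq (le_antisymm (Set.ncard_image_le) ?_)
        rw [← hrange]
        omega
      have hfirst := congrFun (congrArg Prod.fst hsum) (c, e)
      have havg := sum_fiber_average_mul c (fun i => cast_ne_zero _
        (Finset.card_pos.mpr ⟨i, by simp⟩)
        ((Finset.card_le_univ _).trans (Fintype.card_fin h).le))
        (fun i => ((e i).toNat : ZMod p)) (fun i => (x i).1 (c, e)) (fun i j hij => by
          rw [hinj (Set.mem_range_self i) (Set.mem_range_self j) hij])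
      refine cast_ne_zero h hh le_rfl ?_
      simp only [Prod.fst_sum, Finset.sum_apply, Prod.fst_add, Pi.add_apply, Prod.smul_fst,
        Pi.smul_apply, Finset.sum_add_distrib, Finset.sum_sub_distrib] at hfirst
      change _ - (∑ i, ((Finset.univ.filter fun j => c j = c i).card : ZMod p)⁻¹ *
        (∑ j ∈ Finset.univ.filter (fun j => c j = c i), ((e j).toNat : ZMod p)) *
          (x i).1 (c, e)) + _ = _ at hfirst
      simp only [nsmul_eq_mul] at hfirst
      rw [havg, sub_add_cancel] at hfirst
      simpa using hfirst

/-- There is a subset `A` of a finite abelian group whose differences cover the group, while its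
`h`-fold sums do not. -/
lemma exists_sub_eq_univ_nfoldSum_ne_univ (h : ℕ) (hh : 0 < h) :
    ∃ (W : Type) (_ : AddCommGroup W) (_ : Fintype W) (A : Set W),
      A - A = Set.univ ∧ nfoldSum h A ≠ Set.univ := by
  obtain ⟨W, _, _, f, hf⟩ := exists_map_sum_ne_zero h hh h
  refine ⟨W, inferInstance, inferInstance, {a | ∃ x, ∃ b : Bool, a = f x + b.toNat • x},
    Set.eq_univ_of_forall fun w => ?_, fun huniv => ?_⟩
  · exact ⟨f w + w, ⟨w, true, by simp⟩, f w, ⟨w, false, by simp⟩, by simp⟩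
  · obtain ⟨a, ha, hsum⟩ : (0 : W) ∈ nfoldSum h _ := huniv ▸ Set.mem_univ _
    choose x e hxe using ha
    refine hf x e ?_ ?_
    · rw [← Set.image_univ]
      exact (Set.ncard_image_le).trans (by simp [Set.ncard_univ])
    · rw [hsum]
      exact Finset.sum_congr rfl fun i _ => (hxe i).symm

lemma nfoldSum_pi_subset {ι W : Type*} [AddCommMonoid W] (h : ℕ) (A : Set W) :
    nfoldSum h (Set.univ.pi fun _ : ι => A) ⊆ Set.univ.pi fun _ : ι => nfoldSum h A := by
  rintro _ ⟨a, ha, rfl⟩ j _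
  exact ⟨fun i => a i j, fun i => ha i j trivial, Finset.sum_apply _ _ _⟩

theorem haight_ruzsa (h : ℕ) (hh : 0 < h) (ε : ℝ) (hε : 0 < ε) :
    ∃ (W : Type) (_ : AddCommGroup W) (_ : Fintype W) (A : Set W),
      A - A = Set.univ ∧
      (Nat.card (nfoldSum h A) : ℝ) < ε * (Fintype.card W : ℝ) := by
  classical
  obtain ⟨W, _, _, A, hA, hne⟩ := exists_sub_eq_univ_nfoldSum_ne_univ h hh
  have hlt : (nfoldSum h A).ncard < Fintype.card W := by
    rw [← Nat.card_eq_fintype_card]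
    exact Set.ncard_lt_card hne
  have hW : (0 : ℝ) < Fintype.card W := by exact_mod_cast (Nat.zero_le _).trans_lt hlt
  obtain ⟨n, hn⟩ := exists_pow_lt_of_lt_one hε
    ((div_lt_one hW).mpr (by exact_mod_cast hlt : ((nfoldSum h A).ncard : ℝ) < _))
  refine ⟨Fin n → W, inferInstance, inferInstance, Set.univ.pi fun _ => A,
    Set.eq_univ_of_forall fun w => ?_, ?_⟩
  · have hw : ∀ i, ∃ a ∈ A, ∃ b ∈ A, a - b = w i := fun i =>
      Set.mem_sub.mp (hA ▸ Set.mem_univ (w i))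
    choose a ha b hb hab using hw
    exact ⟨a, fun i _ => ha i, b, fun i _ => hb i, funext hab⟩
  · have hcard : Nat.card (nfoldSum h (Set.univ.pi fun _ : Fin n => A)) ≤
        (nfoldSum h A).ncard ^ n := by
      refine (Set.ncard_le_ncard (nfoldSum_pi_subset h A)).trans_eq ?_
      rw [← Nat.card_coe_set_eq, Nat.card_congr (Equiv.Set.univPi _), Nat.card_pi]
      simp [-Nat.card_eq_fintype_card, Nat.card_coe_set_eq]
    rw [div_pow, div_lt_iff₀ (pow_pos hW n)] at hn
    simp only [Fintype.card_pi, Finset.prod_const, Finset.card_univ, Fintype.card_fin,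
      Nat.cast_pow]
    exact lt_of_le_of_lt (by exact_mod_cast hcard) hn
end

section
/- For every positive integer h and every ε > 0, there exists a square-free positive integer m*, all of whose prime factors exceed h, and a subset A of ℤ/m*ℤ such that A − A = ℤ/m*ℤ and |hA| < ε·m*. -/
open Pointwise

/-- Any finite type can be injectively labelled by arbitrarily large primes. -/
lemma exists_injective_prime_gt (κ : Type) [Finite κ] (N : ℕ) :
    ∃ q : κ → ℕ, Function.Injective q ∧ ∀ t, (q t).Prime ∧ N < q t := by
  have hinf : {p : ℕ | p.Prime ∧ N < p}.Infinite := by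
    refine Set.infinite_of_not_bddAbove fun ⟨B, hB⟩ => ?_
    obtain ⟨p, hp, hpp⟩ := Nat.exists_infinite_primes (max B N + 1)
    have : p ≤ B := hB ⟨hpp, by omega⟩
    omega
  have := hinf.to_subtype
  obtain ⟨n, ⟨e⟩⟩ := Finite.exists_equiv_fin κ
  let g := Infinite.natEmbedding {p : ℕ | p.Prime ∧ N < p}
  refine ⟨fun t => g (e t), fun t t' htt => ?_, fun t => (g (e t)).2⟩
  exact e.injective (Fin.ext (g.injective (Subtype.ext htt)))

/-- If `x` is constant on the fibres of `c`, then averaging over the fibres the contributions of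
the indices in `J` recovers the sum of `x` over `J`. -/
lemma sum_fibre_average {h q : ℕ} (hq : q.Prime) (hhq : h < q) {G : Type*} [DecidableEq G]
    (c : Fin h → G) (x : Fin h → ZMod q) (hx : ∀ k l, c k = c l → x k = x l)
    (J : Finset (Fin h)) :
    ∑ k, (((J.filter fun l => c l = c k).card : ZMod q) *
      ((Finset.univ.filter fun l => c l = c k).card : ZMod q)⁻¹) * x k = ∑ l ∈ J, x l := by
  have expand (k : Fin h) : (((J.filter fun l => c l = c k).card : ZMod q) *
      ((Finset.univ.filter fun l => c l = c k).card : ZMod q)⁻¹) * x k =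
      ∑ l ∈ J, if c k = c l then
        ((Finset.univ.filter fun i => c i = c l).card : ZMod q)⁻¹ * x l else 0 := by
    rw [mul_assoc, ← nsmul_eq_mul, ← Finset.sum_const, Finset.sum_filter]
    refine Finset.sum_congr rfl fun l _ => ?_
    by_cases hkl : c k = c l
    · simp [hkl, hx k l hkl]
    · simp [hkl, Ne.symm hkl]
  simp_rw [expand]
  rw [Finset.sum_comm]
  refine Finset.sum_congr rfl fun l _ => ?_
  rw [← Finset.sum_filter, Finset.sum_const, nsmul_eq_mul, ← mul_assoc,
    ZMod.coe_mul_inv_eq_one, one_mul]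
  refine (Nat.coprime_of_lt_prime ?_ ?_ hq).symm
  · exact (Finset.card_pos.2 ⟨l, by simp⟩).ne'
  · exact ((Finset.card_le_univ _).trans_eq (Fintype.card_fin h)).trans_lt hhq

/-- In a suitable product of prime fields with small total reciprocal sum there is a function `f`
such that each sum of `h` terms `f d` or `f d + d` which involves at most `s` distinct values of
`d` vanishes in some coordinate. -/
lemma exists_vanishing_coordinate (h : ℕ) (hh : 0 < h) (s : ℕ) :
    ∀ ε : ℝ, 0 < ε → ∃ (ι : Type) (_ : Fintype ι) (p : ι → ℕ), Function.Injective p ∧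
      (∀ i, (p i).Prime ∧ h < p i) ∧ ∑ i, (p i : ℝ)⁻¹ < ε ∧
      ∃ f : (∀ i, ZMod (p i)) → ∀ i, ZMod (p i),
        ∀ (d : Fin h → ∀ i, ZMod (p i)) (J : Finset (Fin h)),
          s < (Set.range d).ncard ∨ ∃ i, ∑ k, f (d k) i + ∑ k ∈ J, d k i = 0 := by
  classical
  induction s with
  | zero =>
    intro ε hε
    refine ⟨Empty, inferInstance, Empty.elim, fun i => i.elim, fun i => i.elim, by simpa using hε,
      id, fun d J => Or.inl ?_⟩
    have : Nonempty (Fin h) := ⟨⟨0, hh⟩⟩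
    exact (Set.ncard_pos (Set.finite_range d)).2 (Set.range_nonempty d)
  | succ s ih =>
    intro ε hε
    obtain ⟨ι, _, p, hpinj, hp, hpε, f, hf⟩ := ih (ε / 2) (half_pos hε)
    have (i : ι) : NeZero (p i) := ⟨(hp i).1.ne_zero⟩
    let κ := (∀ i, ZMod (p i)) → Fin (h + 1) × Fin (h + 1)
    obtain ⟨M, hM⟩ := exists_nat_gt ((Fintype.card κ : ℝ) / (ε / 2))
    obtain ⟨q, hqinj, hq⟩ := exists_injective_prime_gt κ (h + M + ∑ i, p i)
    have hqM (t : κ) : (q t : ℝ)⁻¹ < (ε / 2) / Fintype.card κ := by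
      have hc : (0 : ℝ) < Fintype.card κ := by exact_mod_cast Fintype.card_pos_iff.2 ⟨t⟩
      have hMq : (M : ℝ) < q t := by
        have := (hq t).2
        exact_mod_cast (by omega : M < q t)
      rw [← inv_div]
      exact inv_strictAnti₀ (by positivity) (hM.trans hMq)
    have hqε : ∑ t, (q t : ℝ)⁻¹ < ε / 2 := by
      have hne : (Finset.univ : Finset κ).Nonempty := ⟨fun _ => (0, 0), Finset.mem_univ _⟩
      refine (Finset.sum_lt_sum_of_nonempty hne fun t _ => hqM t).trans_eq ?_
      have hc : (Fintype.card κ : ℝ) ≠ 0 := by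
        exact_mod_cast (Fintype.card_pos_iff.2 ⟨hne.choose⟩).ne'
      rw [Finset.sum_const, Finset.card_univ, nsmul_eq_mul]
      field_simp
    have hpq (i : ι) (t : κ) : p i < q t := by
      have h₁ := Finset.single_le_sum (f := p) (fun _ _ => Nat.zero_le _) (Finset.mem_univ i)
      have h₂ := (hq t).2
      omega
    let π : (∀ i, ZMod (Sum.elim p q i)) → ∀ i, ZMod (p i) := fun d i => d (Sum.inl i)
    let ρ : (∀ i, ZMod (Sum.elim p q i)) → ∀ t, ZMod (q t) := fun d t => d (Sum.inr t)
    refine ⟨ι ⊕ κ, inferInstance, Sum.elim p q,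
      hpinj.sumElim hqinj fun i t => (hpq i t).ne, ?_, ?_, ?_⟩
    · rintro (i | t)
      · exact hp i
      · exact ⟨(hq t).1, by have := (hq t).2; simp only [Sum.elim_inr]; omega⟩
    · rw [Fintype.sum_sum_type]
      simp only [Sum.elim_inl, Sum.elim_inr]
      linarith
    · refine ⟨fun d => fun
        | Sum.inl i => f (π d) i
        | Sum.inr t => -((((t (π d)).1 : ℕ) : ZMod (q t)) * (((t (π d)).2 : ℕ) : ZMod (q t))⁻¹) *
            ρ d t, fun d J => ?_⟩
      rcases hf (fun k => π (d k)) J with hs | ⟨i, hi⟩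
      swap
      · exact Or.inr ⟨Sum.inl i, hi⟩
      by_cases hlt : s + 1 < (Set.range d).ncard
      · exact Or.inl hlt
      have hrange : Set.range (fun k => π (d k)) = π '' Set.range d := Set.range_comp π d
      have hinj : Set.InjOn π (Set.range d) := by
        refine Set.injOn_of_ncard_image_eq
          (le_antisymm (Set.ncard_image_le (Set.finite_range d)) ?_) (Set.finite_range d)
        rw [← hrange]
        omega
      let t : κ := fun g =>
        (⟨(J.filter fun l => π (d l) = g).card,
          Nat.lt_succ_of_le ((Finset.card_le_univ _).trans_eq (Fintype.card_fin h))⟩,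
        ⟨(Finset.univ.filter fun l => π (d l) = g).card,
          Nat.lt_succ_of_le ((Finset.card_le_univ _).trans_eq (Fintype.card_fin h))⟩)
      refine Or.inr ⟨Sum.inr t, ?_⟩
      have key := sum_fibre_average (hq t).1 (by have := (hq t).2; omega) (fun k => π (d k))
        (fun k => ρ (d k) t)
        (fun k l hkl => by rw [hinj ⟨k, rfl⟩ ⟨l, rfl⟩ hkl]) J
      have vanish : ∑ k, -((((t (π (d k))).1 : ℕ) : ZMod (q t)) *
          (((t (π (d k))).2 : ℕ) : ZMod (q t))⁻¹) * ρ (d k) t + ∑ k ∈ J, ρ (d k) t = 0 := by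
        simp_rw [neg_mul, Finset.sum_neg_distrib]
        exact neg_add_eq_zero.2 key
      exact vanish

/-- The vectors in `∏ i, ZMod (p i)` that vanish in a given coordinate have density `1 / p i`. -/
lemma card_coordinate_eq_zero {ι : Type*} [Fintype ι] (p : ι → ℕ) (hp : ∀ i, 0 < p i) (i : ι) :
    (Nat.card {v : ∀ j, ZMod (p j) | v i = 0} : ℝ) = (∏ j, p j : ℕ) * (p i : ℝ)⁻¹ := by
  classical
  have (j : ι) : NeZero (p j) := ⟨(hp j).ne'⟩
  let S : ∀ j, Finset (ZMod (p j)) := Function.update (fun _ => Finset.univ) i {0}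
  have hS : {v : ∀ j, ZMod (p j) | v i = 0} = (Fintype.piFinset S : Set (∀ j, ZMod (p j))) := by
    ext v
    simp only [Set.mem_ofPred_eq, Finset.mem_coe, Fintype.mem_piFinset]
    refine ⟨fun hv j => ?_, fun hv => by simpa [S] using hv i⟩
    rcases eq_or_ne j i with rfl | hji
    · simp [S, hv]
    · simp [S, hji]
  rw [hS, Nat.card_coe_set_eq, Set.ncard_coe_finset, Fintype.card_piFinset,
    ← Finset.mul_prod_erase _ _ (Finset.mem_univ i),
    ← Finset.mul_prod_erase _ p (Finset.mem_univ i)]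
  have hcongr : ∏ j ∈ Finset.univ.erase i, (S j).card = ∏ j ∈ Finset.univ.erase i, p j :=
    Finset.prod_congr rfl fun j hj => by simp [S, Finset.ne_of_mem_erase hj, ZMod.card]
  have hpi : (p i : ℝ) ≠ 0 := by exact_mod_cast (hp i).ne'
  rw [hcongr]
  simp only [S, Function.update_self, Finset.card_singleton, one_mul, Nat.cast_mul]
  field_simp

theorem haight_ruzsa_cyclic (h : ℕ) (hh : 0 < h) (ε : ℝ) (hε : 0 < ε) :
    ∃ m : ℕ, 0 < m ∧ Squarefree m ∧ (∀ p : ℕ, p.Prime → p ∣ m → h < p) ∧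
      ∃ A : Set (ZMod m),
        A - A = Set.univ ∧
        (Nat.card (nfoldSum h A) : ℝ) < ε * (m : ℝ) := by
  classical
  obtain ⟨ι, _, p, hpinj, hp, hpε, f, hf⟩ := exists_vanishing_coordinate h hh h ε hε
  have (i : ι) : NeZero (p i) := ⟨(hp i).1.ne_zero⟩
  have hcop : Pairwise (Function.onFun Nat.Coprime p) := fun i j hij =>
    (Nat.coprime_primes (hp i).1 (hp j).1).2 (hpinj.ne hij)
  have hm : 0 < ∏ i, p i := Finset.prod_pos fun i _ => (hp i).1.pos
  let e := ZMod.prodEquivPi p hcop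
  refine ⟨∏ i, p i, hm, ?_, ?_, {z | ∃ d, e z = f d ∨ e z = f d + d}, ?_, ?_⟩
  · exact Finset.squarefree_prod_of_pairwise_isCoprime
      (fun i _ j _ hij => Nat.coprime_iff_isRelPrime.1 (hcop hij))
      (fun i _ => (hp i).1.prime.squarefree)
  · intro r hr hrm
    obtain ⟨i, -, hi⟩ := (hr.prime.dvd_finsetProd_iff p).1 hrm
    rw [(Nat.prime_dvd_prime_iff_eq hr (hp i).1).1 hi]
    exact (hp i).2
  · refine Set.eq_univ_of_forall fun z => Set.mem_sub.2
      ⟨e.symm (f (e z) + e z), ⟨e z, Or.inr (e.apply_symm_apply _)⟩,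
        e.symm (f (e z)), ⟨e z, Or.inl (e.apply_symm_apply _)⟩, ?_⟩
    simp
  · have hsub : e '' nfoldSum h {z | ∃ d, e z = f d ∨ e z = f d + d} ⊆
        ⋃ i ∈ (Finset.univ : Finset ι), {v : ∀ j, ZMod (p j) | v i = 0} := by
      rintro _ ⟨_, ⟨a, ha, rfl⟩, rfl⟩
      choose d hd using ha
      let J : Finset (Fin h) := Finset.univ.filter fun k => e (a k) ≠ f (d k)
      have hea (k : Fin h) : e (a k) = f (d k) + if k ∈ J then d k else 0 := by
        by_cases hk : e (a k) = f (d k)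
        · simp [J, hk]
        · simpa [J, hk] using (hd k).resolve_left hk
      rcases hf d J with hlt | ⟨i, hi⟩
      · have hle := Set.ncard_image_le (f := d) (Set.finite_univ (α := Fin h))
        rw [Set.image_univ, Set.ncard_univ, Nat.card_eq_fintype_card, Fintype.card_fin] at hle
        omega
      · refine Set.mem_biUnion (Finset.mem_coe.2 (Finset.mem_univ i)) ?_
        rw [Set.mem_ofPred_eq, map_sum, Finset.sum_apply, ← hi,
          ← Finset.univ_inter J, ← Finset.sum_ite_mem, ← Finset.sum_add_distrib]
        refine Finset.sum_congr rfl fun k _ => ?_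
        rw [hea k]
        by_cases hk : k ∈ J <;> simp [hk]
    have hcard : (nfoldSum h {z | ∃ d, e z = f d ∨ e z = f d + d}).ncard ≤
        ∑ i, {v : ∀ j, ZMod (p j) | v i = 0}.ncard := by
      rw [← Set.ncard_image_of_injective _ e.injective]
      exact (Set.ncard_le_ncard hsub (Set.toFinite _)).trans (Finset.set_ncard_biUnion_le _ _)
    calc (Nat.card (nfoldSum h {z | ∃ d, e z = f d ∨ e z = f d + d}) : ℝ)
        ≤ ∑ i, (Nat.card {v : ∀ j, ZMod (p j) | v i = 0} : ℝ) := by exact_mod_cast hcard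
      _ = (∏ j, p j : ℕ) * ∑ i, (p i : ℝ)⁻¹ := by
          rw [Finset.mul_sum]
          exact Finset.sum_congr rfl fun i _ =>
            card_coordinate_eq_zero p (fun j => (hp j).1.pos) i
      _ < ε * (∏ j, p j : ℕ) := by
          rw [mul_comm]
          exact mul_lt_mul_of_pos_right hpε (by exact_mod_cast hm)
end

section
/- Let q be a prime power with underlying prime p > h for a positive integer h, and let ε > 0. Then there exists a finite-dimensional vector space W over 𝔽_q and a subset A ⊆ W such that A − A = W and |hA| < ε·|W|. -/
open Pointwise

open Finset in
/-- Replacing each coefficient by its average over the fibre of `x` does not change a linear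
combination of vectors that are constant on the fibres of `x`. -/
lemma sum_average_fiber_smul {ι α F M : Type*} [Fintype ι] [DecidableEq α] [Field F]
    [AddCommGroup M] [Module F M] (x : ι → α) (c : ι → F) (v : ι → M)
    (hcard : ∀ j, (#{i | x i = x j} : F) ≠ 0) (hv : ∀ i j, x i = x j → v i = v j) :
    ∑ j, ((∑ i with x i = x j, c i) / (#{i | x i = x j} : F)) • v j = ∑ j, c j • v j := by
  rw [← sum_fiberwise_of_maps_to (s := univ) (t := univ.image x) (g := x) (by simp),
    ← sum_fiberwise_of_maps_to (s := univ) (t := univ.image x) (g := x) (by simp)]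
  refine sum_congr rfl fun a ha => ?_
  obtain ⟨k, -, rfl⟩ := mem_image.1 ha
  have hl : ∀ j ∈ ({i | x i = x k} : Finset ι),
      ((∑ i with x i = x j, c i) / (#{i | x i = x j} : F)) • v j =
        ((∑ i with x i = x k, c i) / (#{i | x i = x k} : F)) • v k := by
    intro j hj
    have hjk : x j = x k := (mem_filter.1 hj).2
    rw [hjk, hv j k hjk]
  have hr : ∀ j ∈ ({i | x i = x k} : Finset ι), c j • v j = c j • v k := by
    intro j hj
    rw [hv j k (mem_filter.1 hj).2]
  rw [sum_congr rfl hl, sum_congr rfl hr, sum_const, ← sum_smul, ← Nat.cast_smul_eq_nsmul F,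
    smul_smul, mul_div_cancel₀ _ (hcard k)]

open Finset in
/-- There are a finite vector space `W` and `f : W → W` such that the sums of `h` terms, each of
the form `f x` or `f x + x`, with at most `k` distinct `x` involved, miss some vector. -/
lemma exists_map_sum_ne_of_card_image_le (h : ℕ) (hh : 0 < h) (F : Type*) [Field F] [Finite F]
    (hF : ∀ b : ℕ, 0 < b → b ≤ h → (b : F) ≠ 0) (k : ℕ) :
    ∃ (W : Type) (_ : AddCommGroup W) (_ : Module F W) (_ : Finite W) (f : W → W) (z : W),
      ∀ (x : Fin h → W) (δ : Fin h → Bool), (Set.range x).ncard ≤ k →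
        ∑ i, (f (x i) + (δ i).toNat • x i) ≠ z := by
  classical
  induction k with
  | zero =>
    refine ⟨PUnit, inferInstance, inferInstance, inferInstance, id, 0, fun x _ hx => ?_⟩
    have := (Set.ncard_eq_zero (Set.toFinite _)).1 (Nat.le_zero.1 hx)
    exact absurd this (Set.nonempty_iff_ne_empty.1 ⟨_, ⟨0, hh⟩, rfl⟩)
  | succ k ih =>
    obtain ⟨W, _, _, _, f, z, hz⟩ := ih
    obtain ⟨e, he⟩ : ∃ e : Shrink.{0} F, e ≠ 0 := exists_ne 0
    let I := (Fin h → W) × (Fin h → Bool)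
    have : Finite (Shrink.{0} F) := Finite.of_equiv F (equivShrink.{0} F)
    let g : W → (I → Shrink.{0} F) → I → Shrink.{0} F := fun w v s =>
      (h : F)⁻¹ • e -
        ((∑ i with s.1 i = w, ((s.2 i).toNat : F)) / (#{i | s.1 i = w} : F)) • v s
    refine ⟨W × (I → Shrink.{0} F), inferInstance, inferInstance, inferInstance,
      fun y => (f y.1, g y.1 y.2), (z, 0), fun y δ hy hsum => ?_⟩
    have hfst := congrArg Prod.fst hsum
    have hsnd := congrFun (congrArg Prod.snd hsum) (fun i => (y i).1, δ)
    simp only [Prod.fst_sum, Prod.snd_sum, Prod.fst_add, Prod.snd_add, Prod.smul_fst,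
      Prod.smul_snd, Finset.sum_apply, Pi.add_apply, Pi.smul_apply, Pi.zero_apply] at hfst hsnd
    have himage : Prod.fst '' Set.range y = Set.range fun i => (y i).1 := by
      rw [← Set.range_comp]; rfl
    have hinj : Set.InjOn Prod.fst (Set.range y) := by
      refine Set.injOn_of_ncard_image_eq (le_antisymm (Set.ncard_image_le (Set.toFinite _)) ?_)
        (Set.toFinite _)
      rw [himage]
      by_contra hlt
      exact hz (fun i => (y i).1) δ (by omega) hfst
    have hfiber := sum_average_fiber_smul (fun i => (y i).1) (fun i => ((δ i).toNat : F))
      (fun i => (y i).2 (fun i => (y i).1, δ))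
      (fun j => hF _ (card_pos.2 ⟨j, by simp⟩) ((card_filter_le _ _).trans (by simp)))
      (fun i j hij => by rw [hinj ⟨i, rfl⟩ ⟨j, rfl⟩ hij])
    simp only [g, sum_add_distrib, sum_sub_distrib, hfiber, Nat.cast_smul_eq_nsmul] at hsnd
    rw [sub_add_cancel, sum_const, card_univ, Fintype.card_fin, ← Nat.cast_smul_eq_nsmul F,
      smul_smul, mul_inv_cancel₀ (hF h hh le_rfl), one_smul] at hsnd
    exact he hsnd

/-- A vector missed by `h`-fold sums of `A` bounds the size of `h`-fold sums of `Aⁿ`. -/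
lemma card_nfoldSum_pi_le {W : Type*} [AddCommGroup W] [Finite W] (h n : ℕ) (A : Set W) (z : W)
    (hz : z ∉ nfoldSum h A) :
    Nat.card (nfoldSum h (Set.univ.pi fun _ : Fin n => A)) ≤ (Nat.card W - 1) ^ n := by
  classical
  have := Fintype.ofFinite W
  have hsub : nfoldSum h (Set.univ.pi fun _ : Fin n => A) ⊆
      (Fintype.piFinset fun _ : Fin n => Finset.univ.erase z : Finset (Fin n → W)) := by
    rintro _ ⟨a, ha, rfl⟩
    simp only [Finset.mem_coe, Fintype.mem_piFinset, Finset.mem_erase, Finset.mem_univ, and_true]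
    rintro j rfl
    exact hz ⟨fun i => a i j, fun i => ha i j trivial, by simp⟩
  calc _ ≤ _ := Nat.card_mono (Set.toFinite _) hsub
    _ = _ := by
      rw [Nat.card_eq_card_toFinset, Finset.toFinset_coe, Fintype.card_piFinset_const,
        Finset.card_erase_of_mem (Finset.mem_univ z), Finset.card_univ, Nat.card_eq_fintype_card]

theorem haight_ruzsa_vector_space (h : ℕ) (hh : 0 < h) (p k : ℕ) (hp : p.Prime)
    (hph : h < p) (hk : 0 < k) (F : Type*) [Field F] [Fintype F]
    (hF : Fintype.card F = p ^ k) (ε : ℝ) (hε : 0 < ε) :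
    ∃ (W : Type) (_ : AddCommGroup W) (_ : Module F W) (_ : Fintype W) (A : Set W),
      FiniteDimensional F W ∧
      A - A = Set.univ ∧
      (Nat.card (nfoldSum h A) : ℝ) < ε * (Fintype.card W : ℝ) := by

  have : Fact p.Prime := ⟨hp⟩
  have : CharP F p := charP_of_card_eq_prime_pow hF
  have hne : ∀ b : ℕ, 0 < b → b ≤ h → (b : F) ≠ 0 := fun b hb hbh hb0 =>
    absurd (Nat.le_of_dvd hb ((CharP.cast_eq_zero_iff F p b).1 hb0)) (by omega)
  obtain ⟨W, _, _, _, f, z, hz⟩ := exists_map_sum_ne_of_card_image_le h hh F hne h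
  let A : Set W := {a | ∃ (x : W) (b : Bool), a = f x + b.toNat • x}
  have hzA : z ∉ nfoldSum h A := by
    rintro ⟨a, ha, hza⟩
    choose x b hab using ha
    refine hz x b ?_ (by simp only [hza, hab])
    rw [← Set.image_univ]
    exact (Set.ncard_image_le Set.finite_univ).trans (by simp)
  have hcard : 0 < Nat.card W := Nat.card_pos
  have hpos : (0 : ℝ) < Nat.card W := by exact_mod_cast hcard
  obtain ⟨n, hn⟩ := exists_pow_lt_of_lt_one hε
    (show ((Nat.card W : ℝ) - 1) / Nat.card W < 1 by rw [div_lt_one hpos]; linarith)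
  refine ⟨Fin n → W, inferInstance, inferInstance, Fintype.ofFinite _,
    Set.univ.pi fun _ => A, Module.Finite.of_finite, ?_, ?_⟩
  · refine Set.eq_univ_of_forall fun w => Set.mem_sub.2
      ⟨fun i => f (w i) + w i, fun i _ => ⟨w i, true, by simp⟩,
        fun i => f (w i), fun i _ => ⟨w i, false, by simp⟩, ?_⟩
    ext i
    simp
  · rw [div_pow, div_lt_iff₀ (by positivity)] at hn
    have hle := card_nfoldSum_pi_le h n A z hzA
    calc (Nat.card (nfoldSum h (Set.univ.pi fun _ : Fin n => A)) : ℝ)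
        ≤ ((Nat.card W - 1) ^ n : ℕ) := by exact_mod_cast hle
      _ = ((Nat.card W : ℝ) - 1) ^ n := by rw [Nat.cast_pow, Nat.cast_pred hcard]
      _ < ε * (Nat.card W : ℝ) ^ n := hn
      _ = _ := by simp [← @Nat.card_eq_fintype_card _ (Fintype.ofFinite _), Nat.card_fun]
end
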